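/- (Bessel δ-method.) Let ε > 0, let A ≥ 0, let k ≥ 1 be an integer, and let U : ℝ → ℝ be a fixed smooth nonnegative function compactly supported in [1,2] and not identically zero; set C_U = (1+i)/Ũ(3/4). Let p be a prime and let N, X > 1 satisfy X > p²/N and X^{1−ε} > N. Then for all integers r, n with N ≤ r, n ≤ 2N, one has (2π C_U r^{1/4} / (i^k p^{1/2} X^{3/4})) · (1/p) Σ_{a mod p} e(a(n−r)/p) · I_k(√r/p, √n/p; X) = δ(r=n)·(1 + E₁) + E₂, where |E₁| ≤ C₁·p/√(NX) with C₁ depending only on k and U, and |E₂| ≤ C₂·X^{−A} with C₂ depending only on k, U, A and ε. Here δ(r=n) equals 1 if r = n and 0 otherwise, and the sum over a runs over a complete set of residues modulo p. -/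

import Mathlib

/-- `e(t) = exp(2πit)`. -/
noncomputable def e (t : ℝ) : ℂ := Complex.exp (2 * (Real.pi : ℂ) * Complex.I * t)

/-- The Bessel function of the first kind of integer order `m`:
`J_m(x) = Σ_{n≥0} (−1)^n (x/2)^{m+2n} / (n! (m+n)!)`. -/
noncomputable def besselJ (m : ℕ) (x : ℝ) : ℝ :=
  ∑' n : ℕ, (-1 : ℝ) ^ n * (x / 2) ^ (m + 2 * n) / ((n.factorial : ℝ) * ((m + n).factorial : ℝ))

/-- The Bessel integral `I_k(a,b;X) = ∫_0^∞ U(x/X) e(2a√x) J_{k−1}(4πb√x) dx`. -/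
noncomputable def Ik (U : ℝ → ℝ) (k : ℕ) (a b X : ℝ) : ℂ :=
  ∫ x in Set.Ioi (0 : ℝ),
    (U (x / X) : ℂ) * e (2 * a * Real.sqrt x) *
      (besselJ (k - 1) (4 * Real.pi * b * Real.sqrt x) : ℂ)

/-- The Mellin transform `Ũ(s) = ∫_0^∞ U(x) x^{s−1} dx` (for real `s`). -/
noncomputable def mellinU (U : ℝ → ℝ) (s : ℝ) : ℝ :=
  ∫ x in Set.Ioi (0 : ℝ), U x * x ^ (s - 1)

section helpers
open Real Set Filter Topology MeasureTheory Complex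

noncomputable def GJ (m : ℤ) (x : ℝ) : ℂ :=
  ∫ φ in (-π)..π, Complex.exp (((m * φ - x * Real.cos φ : ℝ) : ℂ) * I)

lemma GJ_norm_le (m : ℤ) (x : ℝ) : ‖GJ m x‖ ≤ 2 * π := by
  have h := intervalIntegral.norm_integral_le_of_norm_le_const (a := -π) (b := π) (C := 1)
    (f := fun φ : ℝ => Complex.exp (((m * φ - x * Real.cos φ : ℝ) : ℂ) * I))
    (fun φ _ => le_of_eq (Complex.norm_exp_ofReal_mul_I _))
  refine h.trans (le_of_eq ?_)
  rw [abs_of_pos (by linarith [Real.pi_pos])]; ring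

lemma int_exp_circle (j : ℤ) :
    ∫ φ in (-π)..π, Complex.exp (((j * φ : ℝ) : ℂ) * I) = if j = 0 then 2 * (π : ℂ) else 0 := by
  split_ifs with h
  · subst h; simp; ring
  · have hc : (j : ℂ) * I ≠ 0 := mul_ne_zero (by exact_mod_cast h) I_ne_zero
    have : ∀ φ : ℝ, Complex.exp (((j * φ : ℝ) : ℂ) * I) = Complex.exp (((j : ℂ) * I) * φ) := by
      intro φ; push_cast; ring_nf
    simp_rw [this]
    rw [integral_exp_mul_complex hc, div_eq_zero_iff]
    left
    rw [sub_eq_zero, Complex.exp_eq_exp_iff_exists_int]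
    exact ⟨j, by push_cast; ring⟩

lemma sum_aux (z : ℂ) : Summable (fun p : ℕ × ℕ =>
    ‖z ^ p.1 / (p.1.factorial : ℂ) * (z ^ p.2 / (p.2.factorial : ℂ))‖) := by
  have h1 : Summable (fun n : ℕ => ‖z ^ n / (n.factorial : ℂ)‖) := by
    refine (Real.summable_pow_div_factorial ‖z‖).congr (fun n => ?_)
    rw [norm_div, norm_pow, Complex.norm_natCast]
  exact Summable.mul_norm (f := fun n : ℕ => z ^ n / (n.factorial : ℂ))
    (g := fun n : ℕ => z ^ n / (n.factorial : ℂ)) h1 h1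

lemma prod_aux (w1 w2 : ℂ) : HasSum (fun p : ℕ × ℕ =>
    w1 ^ p.1 / (p.1.factorial : ℂ) * (w2 ^ p.2 / (p.2.factorial : ℂ)))
    (Complex.exp w1 * Complex.exp w2) := by
  have h1 : ∀ z : ℂ, Summable (fun n : ℕ => ‖z ^ n / (n.factorial : ℂ)‖) := by
    intro z
    refine (Real.summable_pow_div_factorial ‖z‖).congr (fun n => ?_)
    rw [norm_div, norm_pow, Complex.norm_natCast]
  have e1 : ∀ w : ℂ, HasSum (fun n : ℕ => w ^ n / (n.factorial : ℂ)) (Complex.exp w) := by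
    intro w
    have := NormedSpace.expSeries_div_hasSum_exp (𝔸 := ℂ) w
    rwa [← Complex.exp_eq_exp_ℂ] at this
  have h2 : Summable (fun p : ℕ × ℕ =>
    w1 ^ p.1 / (p.1.factorial : ℂ) * (w2 ^ p.2 / (p.2.factorial : ℂ))) :=
    summable_mul_of_summable_norm (f := fun n : ℕ => w1 ^ n / (n.factorial : ℂ))
    (g := fun n : ℕ => w2 ^ n / (n.factorial : ℂ)) (h1 w1) (h1 w2)
  exact HasSum.mul (f := fun n : ℕ => w1 ^ n / (n.factorial : ℂ))
    (g := fun n : ℕ => w2 ^ n / (n.factorial : ℂ)) (e1 w1) (e1 w2) h2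

lemma besselJ_eq (m : ℕ) (x : ℝ) :
    (besselJ m x : ℂ) = I ^ m / (2 * π) * GJ m x := by
  set z : ℂ := -I * x / 2 with hz
  let F : ℕ × ℕ → ℝ → ℂ := fun p φ =>
    z ^ p.1 / (p.1.factorial : ℂ) * (z ^ p.2 / (p.2.factorial : ℂ)) *
      Complex.exp (((((p.1 : ℤ) - p.2 + m : ℤ) * φ : ℝ) : ℂ) * I)
  have hs : Summable (fun p : ℕ × ℕ => ‖z ^ p.1 / (p.1.factorial : ℂ) * (z ^ p.2 / (p.2.factorial : ℂ))‖) := by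
    exact sum_aux z
  have hS : HasSum (fun p => ∫ φ in (-π)..π, F p φ) (GJ m x) := by
    refine intervalIntegral.hasSum_integral_of_dominated_convergence
      (fun p _ => ‖z ^ p.1 / (p.1.factorial : ℂ) * (z ^ p.2 / (p.2.factorial : ℂ))‖) ?_ ?_ ?_ ?_ ?_
    · intro p
      apply Continuous.aestronglyMeasurable
      simp only [F]; fun_prop
    · intro p
      refine Eventually.of_forall fun φ _ => ?_
      simp only [F]
      rw [norm_mul, Complex.norm_exp_ofReal_mul_I, mul_one]
    · exact Eventually.of_forall fun φ _ => hs
    · exact intervalIntegrable_const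
    · refine Eventually.of_forall fun φ _ => ?_
      set w1 := z * Complex.exp (φ * I)
      set w2 := z * Complex.exp (-(φ * I))
      have e3 := (prod_aux w1 w2).mul_right (Complex.exp (m * φ * I))
      convert e3 using 1
      · rfl
      · funext p
        simp only [F, w1, w2, mul_pow, ← Complex.exp_nat_mul]
        have : Complex.exp (((((p.1 : ℤ) - p.2 + m : ℤ) * φ : ℝ) : ℂ) * I)
          = Complex.exp (p.1 * (φ * I)) * Complex.exp (p.2 * -(φ * I)) * Complex.exp (m * φ * I) := by
          rw [← Complex.exp_add, ← Complex.exp_add]; congr 1; push_cast; ring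
        rw [this]; ring
      · rw [← Complex.exp_add, ← Complex.exp_add]
        congr 1
        have : w1 + w2 = -I * x * Complex.cos φ := by
          simp only [w1, w2, hz]
          rw [Complex.cos, neg_mul (φ : ℂ) I]; ring
        rw [this]; push_cast; ring
  have hinj : Function.Injective (fun n : ℕ => ((n, n + m) : ℕ × ℕ)) := by
    intro a b h; simpa using congrArg Prod.fst h
  have hv : ∀ p, ∫ φ in (-π)..π, F p φ = z ^ p.1 / (p.1.factorial : ℂ) * (z ^ p.2 / (p.2.factorial : ℂ))
      * (if ((p.1 : ℤ) - p.2 + m) = 0 then 2 * (π : ℂ) else 0) := by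
    intro p
    simp only [F]
    rw [intervalIntegral.integral_const_mul, int_exp_circle]
  rw [← hinj.hasSum_iff] at hS
  · have h2 : HasSum (fun n : ℕ => ((-1 : ℝ) ^ n * (x / 2) ^ (m + 2 * n) / ((n.factorial : ℝ) * ((m + n).factorial : ℝ)) : ℝ) * ((1:ℂ))) (I ^ m / (2 * π) * GJ m x) := by
      convert hS.mul_left (I ^ m / (2 * (π:ℂ))) using 1
      · rfl
      funext n
      simp only [Function.comp, hv]
      rw [if_pos (by push_cast; ring)]
      have hpi : (π : ℂ) ≠ 0 := by exact_mod_cast Real.pi_ne_zero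
      have h3 : z ^ n * z ^ (n + m) * I ^ m = (-1) ^ n * (x / 2 : ℂ) ^ (m + 2 * n) := by
        have : z = -I * (x / 2) := by rw [hz]; ring
        rw [this, ← pow_add, mul_pow, show n + (n + m) = 2 * n + m by ring, pow_add (-I), pow_mul, pow_add]
        have h4 : (-I) ^ 2 = -1 := by rw [neg_sq, I_sq]
        have h5 : (-I) ^ m * I ^ m = 1 := by rw [← mul_pow]; simp
        rw [h4, pow_add]
        linear_combination (-1) ^ n * (x / 2 : ℂ) ^ (2 * n) * (x / 2 : ℂ) ^ m * h5
      have f1 : (n.factorial : ℂ) ≠ 0 := by exact_mod_cast n.factorial_ne_zero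
      have f2 : ((n + m).factorial : ℂ) ≠ 0 := by exact_mod_cast (n + m).factorial_ne_zero
      push_cast
      rw [add_comm m n, ← h3]
      field_simp
    simp only [mul_one] at h2
    rw [besselJ, Complex.ofReal_tsum]
    exact h2.tsum_eq
  · intro p hp
    rw [hv, if_neg, mul_zero]
    intro h
    apply hp
    refine ⟨p.1, Prod.ext rfl ?_⟩
    simp only; omega
 
lemma GJ_hasDerivAt (m : ℤ) (x : ℝ) :
    HasDerivAt (GJ m) (-(I / 2) * (GJ (m + 1) x + GJ (m - 1) x)) x := by
  have h := intervalIntegral.hasDerivAt_integral_of_dominated_loc_of_deriv_le (μ := volume)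
    (a := -π) (b := π) (x₀ := x) (s := univ) (bound := fun _ => 1)
    (F := fun (x φ : ℝ) => Complex.exp (((m * φ - x * Real.cos φ : ℝ) : ℂ) * I))
    (F' := fun (x φ : ℝ) => Complex.exp (((m * φ - x * Real.cos φ : ℝ) : ℂ) * I) * ((((-Real.cos φ : ℝ)) : ℂ) * I))
    univ_mem
    (Eventually.of_forall fun y => (by fun_prop : Continuous _).aestronglyMeasurable)
    ((by fun_prop : Continuous _).intervalIntegrable _ _)
    ((by fun_prop : Continuous _).aestronglyMeasurable)
    (Eventually.of_forall fun φ _ y _ => by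
      rw [norm_mul, Complex.norm_exp_ofReal_mul_I, norm_mul, Complex.norm_I, Complex.norm_real]
      simpa using Real.abs_cos_le_one φ)
    intervalIntegrable_const
    (Eventually.of_forall fun φ _ y _ => by
      apply HasDerivAt.cexp
      apply HasDerivAt.mul_const
      apply HasDerivAt.ofReal_comp
      simpa using ((hasDerivAt_id y).mul_const (Real.cos φ)).const_sub (m * φ))
  refine h.2.congr_deriv ?_
  rw [GJ, GJ, ← intervalIntegral.integral_add ((by fun_prop : Continuous _).intervalIntegrable _ _)
    ((by fun_prop : Continuous _).intervalIntegrable _ _), ← intervalIntegral.integral_const_mul]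
  apply intervalIntegral.integral_congr
  intro φ _
  simp only
  have h1 : Complex.exp ((((m + 1 : ℤ) * φ - x * Real.cos φ : ℝ) : ℂ) * I)
    = Complex.exp (((m * φ - x * Real.cos φ : ℝ) : ℂ) * I) * Complex.exp (φ * I) := by
    rw [← Complex.exp_add]; congr 1; push_cast; ring
  have h2 : Complex.exp ((((m - 1 : ℤ) * φ - x * Real.cos φ : ℝ) : ℂ) * I)
    = Complex.exp (((m * φ - x * Real.cos φ : ℝ) : ℂ) * I) * Complex.exp (-φ * I) := by
    rw [← Complex.exp_add]; congr 1; push_cast; ring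
  rw [h1, h2, Complex.ofReal_neg, Complex.ofReal_cos, Complex.cos]; ring

lemma GJ_rec (m : ℤ) (x : ℝ) :
    (m : ℂ) * GJ m x = I * x / 2 * (GJ (m + 1) x - GJ (m - 1) x) := by
  have h : ∫ φ in (-π)..π, Complex.exp (((m * φ - x * Real.cos φ : ℝ) : ℂ) * I) * (((m + x * Real.sin φ : ℝ) : ℂ) * I) = 0 := by
    rw [intervalIntegral.integral_eq_sub_of_hasDerivAt
      (f := fun φ : ℝ => Complex.exp (((m * φ - x * Real.cos φ : ℝ) : ℂ) * I))]
    · rw [sub_eq_zero, Complex.exp_eq_exp_iff_exists_int]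
      refine ⟨m, ?_⟩
      rw [Real.cos_neg]; push_cast; ring
    · intro φ _
      apply HasDerivAt.cexp
      apply HasDerivAt.mul_const
      apply HasDerivAt.ofReal_comp
      have := ((hasDerivAt_id φ).const_mul (m : ℝ)).sub ((Real.hasDerivAt_cos φ).const_mul x)
      simpa using! this
    · exact (by fun_prop : Continuous _).intervalIntegrable _ _
  have h' : I * (m * GJ m x - I * x / 2 * (GJ (m + 1) x - GJ (m - 1) x)) = 0 := by
    rw [← h, GJ, GJ, GJ, ← intervalIntegral.integral_sub ((by fun_prop : Continuous _).intervalIntegrable _ _)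
    ((by fun_prop : Continuous _).intervalIntegrable _ _), ← intervalIntegral.integral_const_mul,
     ← intervalIntegral.integral_const_mul,
     ← intervalIntegral.integral_sub ((by fun_prop : Continuous _).intervalIntegrable _ _)
    ((by fun_prop : Continuous _).intervalIntegrable _ _), ← intervalIntegral.integral_const_mul]
    apply intervalIntegral.integral_congr
    intro φ _
    simp only
    have h1 : Complex.exp ((((m + 1 : ℤ) * φ - x * Real.cos φ : ℝ) : ℂ) * I)
      = Complex.exp (((m * φ - x * Real.cos φ : ℝ) : ℂ) * I) * Complex.exp (φ * I) := by
      rw [← Complex.exp_add]; congr 1; push_cast; ring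
    have h2 : Complex.exp ((((m - 1 : ℤ) * φ - x * Real.cos φ : ℝ) : ℂ) * I)
      = Complex.exp (((m * φ - x * Real.cos φ : ℝ) : ℂ) * I) * Complex.exp (-φ * I) := by
      rw [← Complex.exp_add]; congr 1; push_cast; ring
    rw [h1, h2, Complex.ofReal_add, Complex.ofReal_mul, Complex.ofReal_sin, Complex.sin]
    push_cast
    linear_combination (-Complex.exp ((((m:ℂ) * φ - x * Complex.cos φ)) * I) * x / 2 *(Complex.exp (φ * I)-Complex.exp (-φ * I)) ) * (I_sq) + (Complex.exp ((((m:ℂ) * φ - x * Complex.cos φ)) * I) * x / 2 *(Complex.exp (φ * I)-Complex.exp (-φ * I)) ) * (I_sq)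
  have := (mul_eq_zero.mp h').resolve_left I_ne_zero
  exact sub_eq_zero.mp this

/-- derivative of GJ -/
noncomputable def GJ1 (m : ℤ) (x : ℝ) : ℂ := -(I / 2) * (GJ (m + 1) x + GJ (m - 1) x)
noncomputable def GJ2 (m : ℤ) (x : ℝ) : ℂ :=
  -(I / 2) * (GJ1 (m + 1) x + GJ1 (m - 1) x)

lemma GJ1_hasDerivAt (m : ℤ) (x : ℝ) : HasDerivAt (GJ1 m) (GJ2 m x) x :=
  ((GJ_hasDerivAt (m + 1) x).add (GJ_hasDerivAt (m - 1) x)).const_mul (-(I / 2))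

lemma GJ_ode (m : ℤ) (x : ℝ) :
    (x : ℂ) ^ 2 * GJ2 m x + x * GJ1 m x + (x ^ 2 - m ^ 2) * GJ m x = 0 := by
  have a0 := GJ_rec m x
  have a1 := GJ_rec (m + 1) x
  have a2 := GJ_rec (m - 1) x
  simp only [GJ2, GJ1, show m + 1 - 1 = m by ring, show m - 1 + 1 = m by ring] at *
  push_cast at a1 a2
  linear_combination (-(m:ℂ)) * a0 - (I * x / 2) * a1 + (I * x / 2) * a2 + (x^2*GJ m x)* I_sq

lemma GJ_continuous (m : ℤ) : Continuous (GJ m) :=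
  continuous_iff_continuousAt.2 fun x => (GJ_hasDerivAt m x).continuousAt
lemma GJ1_continuous (m : ℤ) : Continuous (GJ1 m) :=
  continuous_iff_continuousAt.2 fun x => (GJ1_hasDerivAt m x).continuousAt
lemma GJ2_continuous (m : ℤ) : Continuous (GJ2 m) := by
  unfold GJ2
  have h1 := GJ1_continuous (m + 1)
  have h2 := GJ1_continuous (m - 1)
  fun_prop

def SC (V : ℝ → ℂ) : Prop :=
  ContDiff ℝ (⊤ : ℕ∞) V ∧ ∀ u : ℝ, (u ^ 2 < 1 ∨ 4 < u ^ 2) → V u = 0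

lemma SC_open : IsOpen {u : ℝ | u ^ 2 < 1 ∨ 4 < u ^ 2} := by
  have h1 : Continuous fun u : ℝ => u ^ 2 := by fun_prop
  exact (isOpen_lt h1 continuous_const).union (isOpen_lt continuous_const h1)

lemma SC.evz {V : ℝ → ℂ} (h : SC V) {u : ℝ} (hu : u ^ 2 < 1 ∨ 4 < u ^ 2) :
    V =ᶠ[𝓝 u] fun _ => 0 := by
  filter_upwards [SC_open.mem_nhds hu] with v hv using h.2 v hv

lemma SC.cont {V : ℝ → ℂ} (h : SC V) : Continuous V := h.1.continuous

lemma SC.hd {V : ℝ → ℂ} (h : SC V) (u : ℝ) : HasDerivAt V (deriv V u) u :=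
  ((h.1.differentiable (by simp)) u).hasDerivAt

lemma SC.deriv {V : ℝ → ℂ} (h : SC V) : SC (deriv V) := by
  refine ⟨(contDiff_infty_iff_deriv.1 h.1).2, fun u hu => ?_⟩
  rw [(h.evz hu).deriv_eq]; simp

lemma SC.div {V : ℝ → ℂ} (h : SC V) : SC (fun u => V u / (u : ℂ)) := by
  refine ⟨?_, fun u hu => by simp [h.2 u hu]⟩
  rw [contDiff_iff_contDiffAt]
  intro u
  by_cases hu : u = 0
  · have : (fun u : ℝ => V u / (u : ℂ)) =ᶠ[𝓝 u] fun _ => 0 := by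
      filter_upwards [h.evz (u := u) (by left; subst hu; norm_num)] with v hv
      simp [hv]
    exact contDiffAt_const.congr_of_eventuallyEq this
  · have h2 : ContDiffAt ℝ (⊤ : ℕ∞) (fun u : ℝ => (u : ℂ)) u :=
      Complex.ofRealCLM.contDiff.contDiffAt
    have h3 : (u : ℂ) ≠ 0 := by exact_mod_cast hu
    simp only [div_eq_mul_inv]
    exact h.1.contDiffAt.mul (h2.inv h3)

lemma SC.cmul {V : ℝ → ℂ} (h : SC V) (c : ℂ) : SC (fun u => c * V u) :=
  ⟨contDiff_const.mul h.1, fun u hu => by simp [h.2 u hu]⟩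

lemma SC.umul {V : ℝ → ℂ} (h : SC V) : SC (fun u => (u : ℂ) * V u) :=
  ⟨(Complex.ofRealCLM.contDiff).mul h.1, fun u hu => by simp [h.2 u hu]⟩

lemma SC.add {V W : ℝ → ℂ} (h : SC V) (h' : SC W) : SC (fun u => V u + W u) :=
  ⟨h.1.add h'.1, fun u hu => by simp [h.2 u hu, h'.2 u hu]⟩

lemma SC.sub {V W : ℝ → ℂ} (h : SC V) (h' : SC W) : SC (fun u => V u - W u) :=
  ⟨h.1.sub h'.1, fun u hu => by simp [h.2 u hu, h'.2 u hu]⟩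

noncomputable def Osc (m : ℤ) (V : ℝ → ℂ) (α β : ℝ) : ℂ :=
  ∫ u in (1 / 2 : ℝ)..3, V u * Complex.exp (((α * u : ℝ) : ℂ) * I) * GJ m (β * u)

noncomputable def W1 (V : ℝ → ℂ) : ℝ → ℂ := fun u => (V u / (u : ℂ) - deriv V u) - deriv V u
noncomputable def W0 (m : ℤ) (V : ℝ → ℂ) : ℝ → ℂ :=
  fun u => (m : ℂ) ^ 2 * (V u / (u : ℂ) / (u : ℂ)) + deriv (fun u => V u / (u : ℂ) - deriv V u) u

lemma SC.W1 {V : ℝ → ℂ} (h : SC V) : SC (W1 V) := (h.div.sub h.deriv).sub h.deriv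
lemma SC.W0 {V : ℝ → ℂ} (h : SC V) (m : ℤ) : SC (W0 m V) :=
  (h.div.div.cmul _).add (h.div.sub h.deriv).deriv

lemma osc_intble (m : ℤ) {V : ℝ → ℂ} (h : Continuous V) (α β : ℝ) :
    IntervalIntegrable (fun u : ℝ => V u * Complex.exp (((α * u : ℝ) : ℂ) * I) * GJ m (β * u))
      volume (1 / 2 : ℝ) 3 := by
  apply Continuous.intervalIntegrable
  have := GJ_continuous m
  fun_prop

lemma Osc_ibp (m : ℤ) {V : ℝ → ℂ} (h : SC V) (α β : ℝ) :
    ((α : ℂ) ^ 2 - (β : ℂ) ^ 2) * Osc m V α β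
      = - Osc m (W0 m V) α β - I * α * Osc m (W1 V) α β := by
  set Q : ℝ → ℂ := fun u => V u / (u : ℂ) - deriv V u with hQ
  have hQS : SC Q := h.div.sub h.deriv
  set g : ℝ → ℂ := fun u => Complex.exp (((α * u : ℝ) : ℂ) * I) with hg
  have hgd : ∀ u, HasDerivAt g (g u * (α * I)) u := by
    intro u
    apply HasDerivAt.cexp
    apply HasDerivAt.mul_const
    apply HasDerivAt.ofReal_comp
    simpa using (hasDerivAt_id u).const_mul α
  have hfd : ∀ u : ℝ, HasDerivAt (fun u : ℝ => GJ m (β * u)) (β * GJ1 m (β * u)) u := by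
    intro u
    have h1 : HasDerivAt (fun u : ℝ => β * u) β u := by simpa using (hasDerivAt_id u).const_mul β
    have := (GJ_hasDerivAt m (β * u)).scomp u h1
    simpa [GJ1] using! this
  have hf1d : ∀ u : ℝ, HasDerivAt (fun u : ℝ => β * GJ1 m (β * u)) (β * (β * GJ2 m (β * u))) u := by
    intro u
    have h1 : HasDerivAt (fun u : ℝ => β * u) β u := by simpa using (hasDerivAt_id u).const_mul β
    have := ((GJ1_hasDerivAt m (β * u)).scomp u h1).const_mul (β : ℂ)
    simpa using! this
  have hHd : ∀ u : ℝ, HasDerivAt (fun u : ℝ => V u * g u * (β * GJ1 m (β * u))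
      - α * I * (V u * g u * GJ m (β * u)) + Q u * g u * GJ m (β * u))
      (((deriv V u * g u + V u * (g u * (α * I))) * (β * GJ1 m (β * u))
          + V u * g u * (β * (β * GJ2 m (β * u))))
        - α * I * ((deriv V u * g u + V u * (g u * (α * I))) * GJ m (β * u)
          + V u * g u * (β * GJ1 m (β * u)))
        + ((deriv Q u * g u + Q u * (g u * (α * I))) * GJ m (β * u)
          + Q u * g u * (β * GJ1 m (β * u)))) u := by
    intro u
    exact ((((h.hd u).mul (hgd u)).mul (hf1d u)).sub
      ((((h.hd u).mul (hgd u)).mul (hfd u)).const_mul _)).add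
      (((hQS.hd u).mul (hgd u)).mul (hfd u))
  have hgc : Continuous g := by rw [hg]; fun_prop
  have c0 := GJ_continuous m
  have c1 := GJ1_continuous m
  have c2 := GJ2_continuous m
  have c3 := h.cont
  have c4 := h.deriv.cont
  have c5 := hQS.cont
  have c6 := hQS.deriv.cont
  have hz := intervalIntegral.integral_eq_sub_of_hasDerivAt (a := (1 / 2 : ℝ)) (b := 3)
    (fun u _ => hHd u) ((by fun_prop : Continuous _).intervalIntegrable _ _)
  have z1 : V (1 / 2) = 0 := h.2 _ (by left; norm_num)
  have z2 : V 3 = 0 := h.2 _ (by right; norm_num)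
  have z3 : Q (1 / 2) = 0 := hQS.2 _ (by left; norm_num)
  have z4 : Q 3 = 0 := hQS.2 _ (by right; norm_num)
  simp only [z1, z2, z3, z4, zero_mul, mul_zero, sub_self, add_zero] at hz
  have key : ((α : ℂ) ^ 2 - (β : ℂ) ^ 2) * Osc m V α β
      + (Osc m (W0 m V) α β + I * α * Osc m (W1 V) α β) = 0 := by
    rw [← hz, Osc, Osc, Osc, ← intervalIntegral.integral_const_mul,
      ← intervalIntegral.integral_const_mul,
      ← intervalIntegral.integral_add (osc_intble m (h.W0 m).cont α β)
        ((osc_intble m (h.W1).cont α β).const_mul _),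
      ← intervalIntegral.integral_add ((osc_intble m h.cont α β).const_mul _)
        ((osc_intble m (h.W0 m).cont α β).add ((osc_intble m (h.W1).cont α β).const_mul _))]
    apply intervalIntegral.integral_congr
    intro u hu
    rw [uIcc_of_le (by norm_num)] at hu
    have hu0 : (u : ℂ) ≠ 0 := by
      have : u ≠ 0 := by linarith [hu.1]
      exact_mod_cast this
    have ode := GJ_ode m (β * u)
    push_cast at ode
    have ode' : (β : ℂ) * (β * GJ2 m (β * u)) = - (β * GJ1 m (β * u)) / u
        - (β ^ 2 - m ^ 2 / u / u) * GJ m (β * u) := by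
      field_simp
      linear_combination ode
    simp only [_root_.W0, _root_.W1]
    rw [ode']
    change _ + ((_ + deriv Q u) * g u * _ + I * α * ((Q u - deriv V u) * g u * _)) = _
    have hQu : Q u = V u / (u : ℂ) - deriv V u := rfl
    change (α ^ 2 - β ^ 2 : ℂ) * (V u * g u * GJ m (β * u)) + _ = _
    linear_combination (α ^ 2 * V u * g u * GJ m (β * u)) * I_sq
      - (g u * (β * GJ1 m (β * u))) * hQu
  linear_combination key

lemma Osc_decay (m : ℤ) (K : ℕ) : ∀ V : ℝ → ℂ, SC V → ∃ C : ℝ, 0 ≤ C ∧ ∀ α β : ℝ, 1 ≤ α →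
    α ^ 2 ≠ β ^ 2 → ‖Osc m V α β‖ ≤ C * (α / |α ^ 2 - β ^ 2|) ^ K := by
  induction K with
  | zero =>
    intro V hV
    obtain ⟨M, hM⟩ := (isCompact_Icc (a := (1 / 2 : ℝ)) (b := 3)).exists_bound_of_continuousOn
      hV.cont.continuousOn
    have hM0 : 0 ≤ M := (norm_nonneg _).trans (hM 1 (by norm_num))
    refine ⟨M * (2 * π) * |3 - 1 / 2|, by positivity, fun α β _ _ => ?_⟩
    rw [pow_zero, mul_one]
    apply intervalIntegral.norm_integral_le_of_norm_le_const
    intro u hu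
    rw [uIoc_of_le (by norm_num)] at hu
    rw [norm_mul, norm_mul, Complex.norm_exp_ofReal_mul_I, mul_one]
    exact mul_le_mul (hM u ⟨hu.1.le, hu.2⟩) (GJ_norm_le _ _) (norm_nonneg _) hM0
  | succ K ih =>
    intro V hV
    obtain ⟨C0, h0, H0⟩ := ih _ (hV.W0 m)
    obtain ⟨C1, h1, H1⟩ := ih _ hV.W1
    refine ⟨C0 + C1, by positivity, fun α β hα hne => ?_⟩
    have hD : 0 < |α ^ 2 - β ^ 2| := abs_pos.2 (sub_ne_zero.2 hne)
    have h := Osc_ibp m hV α β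
    have hn : |α ^ 2 - β ^ 2| * ‖Osc m V α β‖
        ≤ ‖Osc m (W0 m V) α β‖ + α * ‖Osc m (W1 V) α β‖ := by
      have e1 : ‖((α : ℂ) ^ 2 - (β : ℂ) ^ 2)‖ = |α ^ 2 - β ^ 2| := by
        rw [← Real.norm_eq_abs, ← Complex.norm_real]; push_cast; rfl
      rw [← e1, ← norm_mul, h]
      refine (norm_sub_le _ _).trans ?_
      rw [norm_neg, norm_mul, norm_mul, Complex.norm_I, Complex.norm_real, Real.norm_eq_abs,
        abs_of_nonneg (by linarith : 0 ≤ α), one_mul]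
    set T := (α / |α ^ 2 - β ^ 2|) with hT
    have hTp : 0 ≤ T ^ K := by positivity
    rw [pow_succ]
    have : ‖Osc m V α β‖ ≤ (C0 * T ^ K + α * (C1 * T ^ K)) / |α ^ 2 - β ^ 2| := by
      rw [le_div_iff₀ hD, mul_comm]
      refine hn.trans (add_le_add (H0 α β hα hne) ?_)
      exact mul_le_mul_of_nonneg_left (H1 α β hα hne) (by linarith)
    refine this.trans ?_
    rw [div_le_iff₀ hD]
    have : (C0 + C1) * (T ^ K * T) * |α ^ 2 - β ^ 2| = (C0 + C1) * T ^ K * α := by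
      rw [hT]; field_simp
    rw [this]
    have : C0 * T ^ K ≤ C0 * T ^ K * α := le_mul_of_one_le_right (by positivity) hα
    nlinarith

noncomputable def Vh (V : ℝ → ℂ) (ξ : ℝ) : ℂ :=
  ∫ u in (1 / 2 : ℝ)..3, V u * Complex.exp (((ξ * u : ℝ) : ℂ) * I)

lemma Vh_ibp {V : ℝ → ℂ} (h : SC V) (ξ : ℝ) : (ξ : ℂ) * I * Vh V ξ = - Vh (deriv V) ξ := by
  have hgd : ∀ u : ℝ, HasDerivAt (fun u : ℝ => Complex.exp (((ξ * u : ℝ) : ℂ) * I))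
      (Complex.exp (((ξ * u : ℝ) : ℂ) * I) * (ξ * I)) u := by
    intro u
    apply HasDerivAt.cexp
    apply HasDerivAt.mul_const
    apply HasDerivAt.ofReal_comp
    simpa using (hasDerivAt_id u).const_mul ξ
  have c3 := h.cont
  have c4 := h.deriv.cont
  have hz := intervalIntegral.integral_eq_sub_of_hasDerivAt (a := (1 / 2 : ℝ)) (b := 3)
    (fun u _ => (h.hd u).mul (hgd u)) ((by fun_prop : Continuous _).intervalIntegrable _ _)
  have z1 : V (1 / 2) = 0 := h.2 _ (by left; norm_num)
  have z2 : V 3 = 0 := h.2 _ (by right; norm_num)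
  simp only [Pi.mul_apply, z1, z2, zero_mul, sub_self] at hz
  rw [intervalIntegral.integral_add ((by fun_prop : Continuous _).intervalIntegrable _ _)
    ((by fun_prop : Continuous _).intervalIntegrable _ _)] at hz
  rw [eq_neg_iff_add_eq_zero, ← hz, add_comm, Vh, Vh, ← intervalIntegral.integral_const_mul]
  congr 1
  apply intervalIntegral.integral_congr
  intro u _
  simp only; ring

lemma Vh_bound (n : ℕ) : ∀ V : ℝ → ℂ, SC V → ∃ C : ℝ, 0 ≤ C ∧ ∀ ξ : ℝ, |ξ| ^ n * ‖Vh V ξ‖ ≤ C := by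
  induction n with
  | zero =>
    intro V hV
    obtain ⟨M, hM⟩ := (isCompact_Icc (a := (1 / 2 : ℝ)) (b := 3)).exists_bound_of_continuousOn
      hV.cont.continuousOn
    have hM0 : 0 ≤ M := (norm_nonneg _).trans (hM 1 (by norm_num))
    refine ⟨M * |3 - 1 / 2|, by positivity, fun ξ => ?_⟩
    rw [pow_zero, one_mul]
    apply intervalIntegral.norm_integral_le_of_norm_le_const
    intro u hu
    rw [uIoc_of_le (by norm_num)] at hu
    rw [norm_mul, Complex.norm_exp_ofReal_mul_I, mul_one]
    exact (hM u ⟨hu.1.le, hu.2⟩)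
  | succ n ih =>
    intro V hV
    obtain ⟨C, h, H⟩ := ih _ hV.deriv
    refine ⟨C, h, fun ξ => ?_⟩
    have h1 := congrArg norm (Vh_ibp hV ξ)
    rw [norm_mul, norm_mul, Complex.norm_I, Complex.norm_real, Real.norm_eq_abs, norm_neg, mul_one] at h1
    rw [pow_succ, mul_assoc, h1]
    exact H ξ

lemma Vh_decay {V : ℝ → ℂ} (h : SC V) : ∃ C : ℝ, 0 ≤ C ∧ ∀ ξ : ℝ, 0 ≤ ξ →
    ‖Vh V ξ‖ ≤ C / (1 + ξ) ^ 3 := by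
  obtain ⟨C0, h0, H0⟩ := Vh_bound 0 V h
  obtain ⟨C3, h3, H3⟩ := Vh_bound 3 V h
  refine ⟨4 * (C0 + C3), by positivity, fun ξ hξ => ?_⟩
  have a := H0 ξ
  have b := H3 ξ
  rw [abs_of_nonneg hξ] at b
  rw [pow_zero, one_mul] at a
  rw [le_div_iff₀ (by positivity)]
  have e1 : (1 + ξ) ^ 3 ≤ 4 * (1 + ξ ^ 3) := by nlinarith [mul_nonneg (by linarith : 0 ≤ 1 + ξ) (sq_nonneg (1 - ξ))]
  have e2 := mul_le_mul_of_nonneg_left e1 (norm_nonneg (Vh V ξ))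
  linarith

lemma Vh_hasDerivAt {V : ℝ → ℂ} (hV : SC V) (ξ : ℝ) :
    HasDerivAt (Vh V) (I * Vh (fun u => (u : ℂ) * V u) ξ) ξ := by
  have c := hV.cont
  have h := intervalIntegral.hasDerivAt_integral_of_dominated_loc_of_deriv_le (μ := volume)
    (a := (1 / 2 : ℝ)) (b := 3) (x₀ := ξ) (s := univ) (bound := fun u => ‖V u‖ * |u|)
    (F := fun (x u : ℝ) => V u * Complex.exp (((x * u : ℝ) : ℂ) * I))
    (F' := fun (x u : ℝ) => V u * (Complex.exp (((x * u : ℝ) : ℂ) * I) * ((u : ℂ) * I)))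
    univ_mem
    (Eventually.of_forall fun y => (by fun_prop : Continuous _).aestronglyMeasurable)
    ((by fun_prop : Continuous _).intervalIntegrable _ _)
    ((by fun_prop : Continuous _).aestronglyMeasurable)
    (Eventually.of_forall fun φ _ y _ => by
      rw [norm_mul, norm_mul, Complex.norm_exp_ofReal_mul_I, norm_mul, Complex.norm_I, Complex.norm_real]
      simp)
    ((by fun_prop : Continuous _).intervalIntegrable _ _)
    (Eventually.of_forall fun φ _ y _ => by
      apply HasDerivAt.const_mul
      apply HasDerivAt.cexp
      apply HasDerivAt.mul_const
      apply HasDerivAt.ofReal_comp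
      simpa using ((hasDerivAt_id y).mul_const φ))
  refine h.2.congr_deriv ?_
  rw [Vh, ← intervalIntegral.integral_const_mul]
  apply intervalIntegral.integral_congr
  intro u _
  simp only; ring

lemma Vh_continuous {V : ℝ → ℂ} (hV : SC V) : Continuous (Vh V) :=
  continuous_iff_continuousAt.2 fun x => (Vh_hasDerivAt hV x).continuousAt

lemma GJ_neg (m : ℤ) (x : ℝ) : GJ (-m) x = GJ m x := by
  have := intervalIntegral.integral_comp_neg (a := -π) (b := π)
    (fun φ : ℝ => Complex.exp (((m * φ - x * Real.cos φ : ℝ) : ℂ) * I))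
  rw [neg_neg] at this
  rw [GJ, GJ, ← this]
  apply intervalIntegral.integral_congr
  intro φ _
  simp

lemma GJ_cos (m : ℤ) (x : ℝ) : GJ m x =
    ∫ φ in (-π)..π, (Real.cos (m * φ) : ℂ) * Complex.exp (((-(x * Real.cos φ) : ℝ) : ℂ) * I) := by
  have h : GJ m x = (1 / 2 : ℂ) * (GJ m x + GJ (-m) x) := by rw [GJ_neg]; ring
  rw [h, GJ, GJ, ← intervalIntegral.integral_add ((by fun_prop : Continuous _).intervalIntegrable _ _)
    ((by fun_prop : Continuous _).intervalIntegrable _ _), ← intervalIntegral.integral_const_mul]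
  apply intervalIntegral.integral_congr
  intro φ _
  simp only
  rw [Complex.ofReal_cos, Complex.cos]
  have h1 : Complex.exp (((m * φ - x * Real.cos φ : ℝ) : ℂ) * I)
    = Complex.exp (((m * φ : ℝ) : ℂ) * I) * Complex.exp (((-(x * Real.cos φ) : ℝ) : ℂ) * I) := by
    rw [← Complex.exp_add]; congr 1; push_cast; ring
  have h2 : Complex.exp ((((-m : ℤ) * φ - x * Real.cos φ : ℝ) : ℂ) * I)
    = Complex.exp (-((m * φ : ℝ) : ℂ) * I) * Complex.exp (((-(x * Real.cos φ) : ℝ) : ℂ) * I) := by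
    rw [← Complex.exp_add]; congr 1; push_cast; ring
  rw [h1, h2]; ring

lemma Osc_diag (m : ℤ) {V : ℝ → ℂ} (hV : SC V) (β : ℝ) : Osc m V β β =
    ∫ φ in (-π)..π, (Real.cos (m * φ) : ℂ) * Vh V (β * (1 - Real.cos φ)) := by
  have c := hV.cont
  simp only [Osc, GJ_cos, Vh]
  simp only [← intervalIntegral.integral_const_mul]
  rw [MeasureTheory.intervalIntegral_intervalIntegral_swap]
  · apply intervalIntegral.integral_congr
    intro φ _
    apply intervalIntegral.integral_congr
    intro u _
    simp only
    have h1 : Complex.exp (((β * (1 - Real.cos φ) * u : ℝ) : ℂ) * I)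
      = Complex.exp (((β * u : ℝ) : ℂ) * I) * Complex.exp (((-(β * u * Real.cos φ) : ℝ) : ℂ) * I) := by
      rw [← Complex.exp_add]; congr 1; push_cast; ring
    rw [h1]; ring
  · have hc : Continuous (Function.uncurry fun (u φ : ℝ) => V u * Complex.exp (((β * u : ℝ) : ℂ) * I) *
      ((Real.cos (m * φ) : ℂ) * Complex.exp (((-(β * u * Real.cos φ) : ℝ) : ℂ) * I))) := by
      simp only [Function.uncurry_def]; fun_prop
    refine (hc.continuousOn.integrableOn_compact
      ((isCompact_uIcc (a := (1 / 2 : ℝ)) (b := 3)).prod (isCompact_uIcc (a := -π) (b := π)))).mono_set ?_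
    exact prod_mono uIoc_subset_uIcc uIoc_subset_uIcc

lemma cos_quartic (φ : ℝ) : φ ^ 2 / 2 - (1 - Real.cos φ) ≤ φ ^ 4 := by
  by_cases h : |φ| ≤ 1
  · have := (abs_le.1 (Real.cos_bound h)).2
    have e1 : |φ| ^ 4 = φ ^ 4 := by
      rw [show 4 = 2 * 2 by norm_num, pow_mul, sq_abs, ← pow_mul]
    rw [e1] at this
    nlinarith [show 0 ≤ φ ^ 4 by positivity]
  · have : 1 < φ ^ 2 := by rw [← sq_abs]; nlinarith
    nlinarith [Real.cos_le_one φ]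

lemma diag_pointwise (m : ℤ) {V : ℝ → ℂ} (hV : SC V) : ∃ C : ℝ, 0 ≤ C ∧ ∀ β : ℝ, 0 < β → ∀ φ : ℝ,
    ‖(Ioc (-π) π).indicator (fun φ => (Real.cos (m * φ) : ℂ) * Vh V (β * (1 - Real.cos φ))) φ
      - Vh V (β * φ ^ 2 / 2)‖ ≤ C * (φ ^ 2 / (1 + β * φ ^ 2 / 5) ^ 2) := by
  obtain ⟨C0, h0, H0⟩ := Vh_decay hV
  obtain ⟨C1, h1, H1⟩ := Vh_decay hV.umul
  refine ⟨(m : ℝ) ^ 2 * C0 + 5 * C1 + C0, by positivity, fun β hβ φ => ?_⟩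
  set t := β * φ ^ 2 / 5 with ht
  have ht0 : 0 ≤ t := by positivity
  have mono : ∀ (C ξ : ℝ), 0 ≤ C → t ≤ ξ → C / (1 + ξ) ^ 3 ≤ C / (1 + t) ^ 3 := by
    intro C ξ hC hξ; gcongr
  have mono2 : ∀ (C : ℝ), 0 ≤ C → C / (1 + t) ^ 3 ≤ C / (1 + t) ^ 2 := by
    intro C hC
    apply div_le_div_of_nonneg_left hC (by positivity)
    exact pow_le_pow_right₀ (by linarith) (by norm_num)
  have hξ2 : t ≤ β * φ ^ 2 / 2 := by
    have : 0 ≤ β * φ ^ 2 := by positivity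
    rw [ht]; linarith
  have hB : ‖Vh V (β * φ ^ 2 / 2)‖ ≤ C0 / (1 + t) ^ 2 :=
    (H0 _ (ht0.trans hξ2)).trans ((mono _ _ h0 hξ2).trans (mono2 _ h0))
  have hpi := Real.pi_gt_three
  by_cases hφ : φ ∈ Ioc (-π) π
  · rw [indicator_of_mem hφ]
    have hξ1 : t ≤ β * (1 - Real.cos φ) := by
      have h := Real.cos_le_one_sub_mul_cos_sq (x := φ) (abs_le.2 ⟨hφ.1.le, hφ.2⟩)
      have h5 : 1 / 5 ≤ 2 / π ^ 2 := by
        rw [div_le_div_iff₀ (by norm_num) (by positivity)]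
        nlinarith [Real.pi_lt_d2]
      have : φ ^ 2 / 5 ≤ 1 - Real.cos φ := by nlinarith [sq_nonneg φ]
      rw [ht, mul_div_assoc]
      exact mul_le_mul_of_nonneg_left this hβ.le
    have hA : ‖Vh V (β * (1 - Real.cos φ))‖ ≤ C0 / (1 + t) ^ 2 :=
      (H0 _ (ht0.trans hξ1)).trans ((mono _ _ h0 hξ1).trans (mono2 _ h0))
    have hAB : ‖Vh V (β * (1 - Real.cos φ)) - Vh V (β * φ ^ 2 / 2)‖
        ≤ C1 / (1 + t) ^ 3 * ‖β * (1 - Real.cos φ) - β * φ ^ 2 / 2‖ := by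
      refine Convex.norm_image_sub_le_of_norm_hasDerivWithin_le (s := Ici t)
        (fun ξ _ => (Vh_hasDerivAt hV ξ).hasDerivWithinAt) ?_ (convex_Ici t) hξ2 hξ1
      intro ξ hξ
      rw [norm_mul, Complex.norm_I, one_mul]
      exact (H1 ξ (ht0.trans hξ)).trans (mono _ _ h1 hξ)
    have hd : ‖β * (1 - Real.cos φ) - β * φ ^ 2 / 2‖ ≤ 5 * t * φ ^ 2 := by
      have q1 := cos_quartic φ
      have q2 := Real.one_sub_sq_div_two_le_cos (x := φ)
      have e1 : β * (1 - Real.cos φ) - β * φ ^ 2 / 2 = -(β * (φ ^ 2 / 2 - (1 - Real.cos φ))) := by ring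
      rw [e1, norm_neg, Real.norm_eq_abs, abs_of_nonneg (mul_nonneg hβ.le (by linarith))]
      have e2 : 5 * t * φ ^ 2 = β * φ ^ 4 := by rw [ht]; ring
      rw [e2]
      exact mul_le_mul_of_nonneg_left q1 hβ.le
    have hAB2 : ‖Vh V (β * (1 - Real.cos φ)) - Vh V (β * φ ^ 2 / 2)‖
        ≤ 5 * C1 * (φ ^ 2 / (1 + t) ^ 2) := by
      refine hAB.trans ((mul_le_mul_of_nonneg_left hd (by positivity)).trans ?_)
      have : C1 / (1 + t) ^ 3 * (5 * t * φ ^ 2) = 5 * C1 * (φ ^ 2 / (1 + t) ^ 2) * (t / (1 + t)) := by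
        field_simp
      rw [this]
      apply mul_le_of_le_one_right (by positivity)
      rw [div_le_one (by positivity)]; linarith
    have hc : ‖((Real.cos (m * φ) : ℂ) - 1)‖ ≤ (m : ℝ) ^ 2 * φ ^ 2 := by
      have q2 := Real.one_sub_sq_div_two_le_cos (x := m * φ)
      have q3 := Real.cos_le_one (m * φ)
      rw [← Complex.ofReal_one, ← Complex.ofReal_sub, Complex.norm_real, Real.norm_eq_abs, abs_le]
      constructor <;> nlinarith [sq_nonneg (m * φ)]
    have split : (Real.cos (m * φ) : ℂ) * Vh V (β * (1 - Real.cos φ)) - Vh V (β * φ ^ 2 / 2)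
        = ((Real.cos (m * φ) : ℂ) - 1) * Vh V (β * (1 - Real.cos φ))
          + (Vh V (β * (1 - Real.cos φ)) - Vh V (β * φ ^ 2 / 2)) := by ring
    rw [split]
    refine (norm_add_le _ _).trans ?_
    rw [norm_mul]
    have := mul_le_mul hc hA (norm_nonneg _) (by positivity)
    have e3 : (m : ℝ) ^ 2 * φ ^ 2 * (C0 / (1 + t) ^ 2) = (m : ℝ) ^ 2 * C0 * (φ ^ 2 / (1 + t) ^ 2) := by ring
    have e4 : 0 ≤ C0 * (φ ^ 2 / (1 + t) ^ 2) := by positivity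
    linarith
  · rw [indicator_of_notMem hφ, zero_sub, norm_neg]
    have hsq : 1 ≤ φ ^ 2 := by
      simp only [mem_Ioc, not_and_or, not_lt, not_le] at hφ
      rcases hφ with h | h <;> nlinarith
    refine hB.trans ?_
    have e3 : C0 / (1 + t) ^ 2 ≤ C0 * (φ ^ 2 / (1 + t) ^ 2) := by
      rw [← mul_div_assoc]; gcongr
      exact le_mul_of_one_le_right h0 hsq
    have e4 : 0 ≤ ((m : ℝ) ^ 2 * C0 + 5 * C1) * (φ ^ 2 / (1 + t) ^ 2) := by positivity
    linarith

lemma g_intble : Integrable (fun y : ℝ => y ^ 2 / (1 + y ^ 2 / 5) ^ 2) := by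
  refine (integrable_inv_one_add_sq.const_mul 25).mono'
    (Continuous.aestronglyMeasurable (Continuous.div (by fun_prop) (by fun_prop) (fun y => by positivity))) ?_
  refine Eventually.of_forall fun y => ?_
  rw [Real.norm_eq_abs, abs_of_nonneg (by positivity), ← div_eq_mul_inv,
    div_le_div_iff₀ (by positivity) (by positivity)]
  nlinarith [sq_nonneg y, sq_nonneg (y ^ 2)]

lemma Vh_sq_bound {V : ℝ → ℂ} (hV : SC V) : ∃ C : ℝ, 0 ≤ C ∧ ∀ y : ℝ,
    ‖Vh V (y ^ 2 / 2)‖ ≤ C * (1 + y ^ 2)⁻¹ := by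
  obtain ⟨C0, h0, H0⟩ := Vh_decay hV
  refine ⟨2 * C0, by positivity, fun y => (H0 _ (by positivity)).trans ?_⟩
  rw [← div_eq_mul_inv, div_le_div_iff₀ (by positivity) (by positivity)]
  have : 1 + y ^ 2 ≤ 2 * (1 + y ^ 2 / 2) ^ 3 := by
    nlinarith [sq_nonneg y, sq_nonneg (y ^ 2), mul_nonneg (sq_nonneg y) (sq_nonneg (y ^ 2))]
  nlinarith

lemma Vh_sq_intble {V : ℝ → ℂ} (hV : SC V) : Integrable (fun y : ℝ => Vh V (y ^ 2 / 2)) := by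
  obtain ⟨C, h0, H⟩ := Vh_sq_bound hV
  have := Vh_continuous hV
  exact (integrable_inv_one_add_sq.const_mul C).mono'
    (by fun_prop : Continuous _).aestronglyMeasurable (Eventually.of_forall H)

lemma diag_asymp (m : ℤ) {V : ℝ → ℂ} (hV : SC V) : ∃ C : ℝ, 0 ≤ C ∧ ∀ β : ℝ, 0 < β →
    ‖Osc m V β β - ((√β)⁻¹ : ℝ) * ∫ y : ℝ, Vh V (y ^ 2 / 2)‖ ≤ C * (β⁻¹ * (√β)⁻¹) := by
  obtain ⟨C, h0, H⟩ := diag_pointwise m hV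
  refine ⟨C * ∫ y : ℝ, y ^ 2 / (1 + y ^ 2 / 5) ^ 2,
    mul_nonneg h0 (integral_nonneg fun y => by positivity), fun β hβ => ?_⟩
  have hs : 0 < √β := Real.sqrt_pos.2 hβ
  have hss : √β ^ 2 = β := Real.sq_sqrt hβ.le
  have cV := Vh_continuous hV
  have e1 : (((√β)⁻¹ : ℝ) : ℂ) * ∫ y : ℝ, Vh V (y ^ 2 / 2) = ∫ φ : ℝ, Vh V (β * φ ^ 2 / 2) := by
    have := Measure.integral_comp_mul_left (fun y : ℝ => Vh V (y ^ 2 / 2)) (√β)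
    rw [abs_of_pos (inv_pos.2 hs), Complex.real_smul] at this
    rw [← this]
    simp only [mul_pow, hss]
  have i1 : Integrable (fun φ : ℝ => Vh V (β * φ ^ 2 / 2)) := by
    have := (Vh_sq_intble hV).comp_mul_left' hs.ne'
    simpa only [mul_pow, hss] using this
  have i2 : Integrable ((Ioc (-π) π).indicator (fun φ => (Real.cos (m * φ) : ℂ) * Vh V (β * (1 - Real.cos φ)))) := by
    rw [integrable_indicator_iff measurableSet_Ioc]
    exact ((by fun_prop : Continuous _).continuousOn.integrableOn_compact isCompact_Icc).mono_set Ioc_subset_Icc_self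
  have e2 : Osc m V β β = ∫ φ : ℝ, (Ioc (-π) π).indicator (fun φ => (Real.cos (m * φ) : ℂ) * Vh V (β * (1 - Real.cos φ))) φ := by
    rw [Osc_diag m hV, intervalIntegral.integral_of_le (by linarith [Real.pi_pos]), integral_indicator measurableSet_Ioc]
  rw [e1, e2, ← integral_sub i2 i1]
  have e3 : ∀ φ : ℝ, φ ^ 2 / (1 + β * φ ^ 2 / 5) ^ 2 = β⁻¹ * ((√β * φ) ^ 2 / (1 + (√β * φ) ^ 2 / 5) ^ 2) := by
    intro φ
    rw [mul_pow, hss]; field_simp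
  have i3 : Integrable (fun φ : ℝ => C * (φ ^ 2 / (1 + β * φ ^ 2 / 5) ^ 2)) := by
    simp only [e3]
    exact ((g_intble.comp_mul_left' hs.ne').const_mul _).const_mul _
  refine (norm_integral_le_of_norm_le i3 (Eventually.of_forall (H β hβ))).trans (le_of_eq ?_)
  simp only [e3]
  rw [integral_const_mul, integral_const_mul,
    Measure.integral_comp_mul_left (fun y : ℝ => y ^ 2 / (1 + y ^ 2 / 5) ^ 2) (√β),
    abs_of_pos (inv_pos.2 hs), smul_eq_mul]
  ring

lemma fresnel_reg {V : ℝ → ℂ} (hV : SC V) {δ : ℝ} (hδ : 0 < δ) :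
    ∫ y : ℝ, Complex.exp (-(δ : ℂ) * (y : ℂ) ^ 2) * Vh V (y ^ 2 / 2)
      = ∫ u in (1 / 2 : ℝ)..3, V u * ((π : ℂ) / ((δ : ℂ) - I * u / 2)) ^ (1 / 2 : ℂ) := by
  have c := hV.cont
  simp only [Vh, ← intervalIntegral.integral_const_mul]
  rw [← MeasureTheory.intervalIntegral_integral_swap]
  · apply intervalIntegral.integral_congr
    intro u _
    simp only
    rw [← integral_gaussian_complex (b := (δ : ℂ) - I * u / 2) (by simpa using hδ),
      ← MeasureTheory.integral_const_mul]
    congr 1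
    funext y
    have : Complex.exp (-((δ : ℂ) - I * u / 2) * (y : ℂ) ^ 2) = Complex.exp (-(δ : ℂ) * (y : ℂ) ^ 2) *
      Complex.exp (((y ^ 2 / 2 * u : ℝ) : ℂ) * I) := by
      rw [← Complex.exp_add]; congr 1; push_cast; ring
    rw [this]; ring
  · have i1 : IntegrableOn V (uIoc (1 / 2 : ℝ) 3) :=
      (c.continuousOn.integrableOn_compact isCompact_uIcc).mono_set uIoc_subset_uIcc
    have i2 : Integrable (fun y : ℝ => Complex.exp (-(δ : ℂ) * (y : ℂ) ^ 2)) :=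
      integrable_cexp_neg_mul_sq (by simpa using hδ)
    have i3 := Integrable.mul_prod i1 i2
    refine i3.mono (Continuous.aestronglyMeasurable ?_) (Eventually.of_forall fun z => ?_)
    · simp only [Function.uncurry_def]; fun_prop
    · simp only [Function.uncurry_def]
      rw [norm_mul, norm_mul, norm_mul, Complex.norm_exp_ofReal_mul_I, mul_one, mul_comm]

lemma cpow_val {u : ℝ} (hu : 0 < u) :
    ((π : ℂ) / (((0 : ℝ) : ℂ) - I * u / 2)) ^ (1 / 2 : ℂ) = (√π : ℂ) * (1 + I) / (√u : ℂ) := by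
  have hu' : (u : ℂ) ≠ 0 := by exact_mod_cast hu.ne'
  have hr : 0 < 2 * π / u := by positivity
  have e1 : (π : ℂ) / (((0 : ℝ) : ℂ) - I * u / 2) = ((2 * π / u : ℝ) : ℂ) * I := by
    push_cast
    have : (0 - I * u / 2 : ℂ) ≠ 0 := by
      rw [zero_sub, neg_ne_zero]; exact div_ne_zero (mul_ne_zero I_ne_zero hu') two_ne_zero
    rw [div_eq_iff this]
    field_simp
    linear_combination (u : ℂ) * I_sq
  have hne : ((2 * π / u : ℝ) : ℂ) * I ≠ 0 := mul_ne_zero (by exact_mod_cast hr.ne') I_ne_zero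
  rw [e1, Complex.cpow_def_of_ne_zero hne, Complex.log_ofReal_mul hr I_ne_zero, Complex.log_I,
    add_mul, Complex.exp_add]
  have e2 : Complex.exp ((Real.log (2 * π / u) : ℂ) * (1 / 2)) = ((√(2 * π / u) : ℝ) : ℂ) := by
    rw [Real.sqrt_eq_rpow, Real.rpow_def_of_pos hr, Complex.ofReal_exp]; push_cast; rfl
  have e3 : Complex.exp ((π : ℂ) / 2 * I * (1 / 2)) = (√2 / 2 : ℝ) * (1 + I) := by
    rw [show (π : ℂ) / 2 * I * (1 / 2) = ((π / 4 : ℝ) : ℂ) * I by push_cast; ring,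
      Complex.exp_mul_I, ← Complex.ofReal_cos, ← Complex.ofReal_sin, Real.cos_pi_div_four,
      Real.sin_pi_div_four]; ring
  rw [e2, e3, Real.sqrt_div (by positivity), Real.sqrt_mul (by norm_num)]
  have h2 : ((√2 : ℝ) : ℂ) * ((√2 : ℝ) : ℂ) = 2 := by
    rw [← Complex.ofReal_mul, Real.mul_self_sqrt (by norm_num)]; norm_num
  push_cast
  linear_combination ((√π : ℂ) * (1 + I) / (√u : ℂ)) / 2 * h2

lemma fresnel {V : ℝ → ℂ} (hV : SC V) :
    ∫ y : ℝ, Vh V (y ^ 2 / 2)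
      = (√π : ℂ) * (1 + I) * ∫ u in (1 / 2 : ℝ)..3, V u / (√u : ℂ) := by
  have c := hV.cont
  have cV := Vh_continuous hV
  have t1 : Tendsto (fun n : ℕ => ∫ y : ℝ, Complex.exp (-((1 / ((n : ℝ) + 1) : ℝ) : ℂ) * (y : ℂ) ^ 2) * Vh V (y ^ 2 / 2))
      atTop (𝓝 (∫ y : ℝ, Vh V (y ^ 2 / 2))) := by
    obtain ⟨C, h0, H⟩ := Vh_sq_bound hV
    refine tendsto_integral_of_dominated_convergence (fun y => C * (1 + y ^ 2)⁻¹) ?_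
      (integrable_inv_one_add_sq.const_mul C) ?_ ?_
    · intro n; exact (by fun_prop : Continuous _).aestronglyMeasurable
    · intro n
      refine Eventually.of_forall fun y => ?_
      rw [norm_mul]
      refine (mul_le_of_le_one_left (norm_nonneg _) ?_).trans (H y)
      rw [Complex.norm_exp, ← Complex.ofReal_pow, ← Complex.ofReal_neg, ← Complex.ofReal_mul, Complex.ofReal_re,
        Real.exp_le_one_iff]
      have : 0 ≤ 1 / ((n : ℝ) + 1) * y ^ 2 := by positivity
      linarith
    · refine Eventually.of_forall fun y => ?_
      have hcont : Continuous (fun d : ℝ => Complex.exp (-(d : ℂ) * (y : ℂ) ^ 2) * Vh V (y ^ 2 / 2)) := by fun_prop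
      have := (hcont.tendsto 0).comp tendsto_one_div_add_atTop_nhds_zero_nat
      have e0 : Complex.exp (-((0 : ℝ) : ℂ) * (y : ℂ) ^ 2) * Vh V (y ^ 2 / 2) = Vh V (y ^ 2 / 2) := by simp
      rw [e0] at this
      exact this
  have t2 : Tendsto (fun n : ℕ => ∫ u in (1 / 2 : ℝ)..3, V u * ((π : ℂ) / (((1 / ((n : ℝ) + 1) : ℝ) : ℂ) - I * u / 2)) ^ (1 / 2 : ℂ))
      atTop (𝓝 (∫ u in (1 / 2 : ℝ)..3, V u * ((π : ℂ) / (((0 : ℝ) : ℂ) - I * u / 2)) ^ (1 / 2 : ℂ))) := by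
    have hslit : ∀ d u : ℝ, 0 ≤ d → 0 < u → (π : ℂ) / ((d : ℂ) - I * u / 2) ∈ Complex.slitPlane := by
      intro d u hd hu
      right
      have hne : (d : ℂ) - I * u / 2 ≠ 0 := by
        intro h
        have := congrArg Complex.im h
        simp at this
        exact hu.ne' this
      rw [Complex.div_im]
      have hns : 0 < Complex.normSq ((d : ℂ) - I * u / 2) := Complex.normSq_pos.2 hne
      have him : ((d : ℂ) - I * u / 2).im = - (u / 2) := by simp
      rw [him]
      simp only [Complex.ofReal_im, Complex.ofReal_re, zero_mul, zero_div, zero_sub]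
      have : 0 < π * (u / 2) / Complex.normSq ((d : ℂ) - I * u / 2) := by positivity
      intro h
      rw [mul_neg, neg_div, neg_neg] at h
      linarith
    have hne : ∀ d u : ℝ, 0 < u → (d : ℂ) - I * u / 2 ≠ 0 := by
      intro d u hu h
      have := congrArg Complex.im h
      simp at this
      exact hu.ne' this
    refine intervalIntegral.tendsto_integral_filter_of_dominated_convergence
      (fun u => ‖V u‖ * √(4 * π)) ?_ ?_ ?_ ?_
    · refine Eventually.of_forall fun n => ?_
      apply ContinuousOn.aestronglyMeasurable _ measurableSet_uIoc
      apply c.continuousOn.mul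
      intro u hu
      rw [uIoc_of_le (by norm_num)] at hu
      have hu0 : 0 < u := by linarith [hu.1]
      apply ContinuousAt.continuousWithinAt
      refine ContinuousAt.cpow (f := fun u : ℝ => (π : ℂ) / (((1 / ((n : ℝ) + 1) : ℝ) : ℂ) - I * u / 2)) ?_ continuousAt_const (hslit _ _ (by positivity) hu0)
      exact ContinuousAt.div (by fun_prop) (by fun_prop) (hne _ _ hu0)
    · refine Eventually.of_forall fun n => Eventually.of_forall fun u hu => ?_
      rw [uIoc_of_le (by norm_num)] at hu
      have hu0 : 0 < u := by linarith [hu.1]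
      rw [norm_mul]
      refine mul_le_mul_of_nonneg_left ?_ (norm_nonneg _)
      rw [show (1 / 2 : ℂ) = ((1 / 2 : ℝ) : ℂ) by push_cast; rfl,
        Complex.norm_cpow_real, ← Real.sqrt_eq_rpow]
      apply Real.sqrt_le_sqrt
      rw [norm_div, Complex.norm_real, Real.norm_eq_abs, abs_of_pos Real.pi_pos]
      have h4 : 1 / 4 ≤ ‖((1 / ((n : ℝ) + 1) : ℝ) : ℂ) - I * u / 2‖ := by
        refine le_trans ?_ (Complex.abs_im_le_norm _)
        simp
        rw [abs_of_pos (by linarith)]; linarith [hu.1]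
      rw [div_le_iff₀ (by linarith)]
      nlinarith [Real.pi_pos]
    · exact (by fun_prop : Continuous _).intervalIntegrable _ _
    · refine Eventually.of_forall fun u hu => ?_
      rw [uIoc_of_le (by norm_num)] at hu
      have hu0 : 0 < u := by linarith [hu.1]
      apply Tendsto.const_mul
      have hcont : ContinuousAt (fun d : ℝ => ((π : ℂ) / ((d : ℂ) - I * u / 2)) ^ (1 / 2 : ℂ)) 0 := by
        refine ContinuousAt.cpow (f := fun d : ℝ => (π : ℂ) / ((d : ℂ) - I * u / 2)) ?_ continuousAt_const (hslit _ _ le_rfl hu0)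
        exact ContinuousAt.div (by fun_prop) (by fun_prop) (hne _ _ hu0)
      exact hcont.tendsto.comp tendsto_one_div_add_atTop_nhds_zero_nat
  have t3 := t1.congr (fun n : ℕ => fresnel_reg hV (δ := 1 / ((n : ℝ) + 1)) (by positivity))
  rw [tendsto_nhds_unique t3 t2, ← intervalIntegral.integral_const_mul]
  apply intervalIntegral.integral_congr
  intro u hu
  rw [uIcc_of_le (by norm_num)] at hu
  simp only
  rw [cpow_val (by linarith [hu.1])]
  ring

lemma subst_sq (F : ℝ → ℂ) (hF : ∀ x : ℝ, (x < 1 ∨ 4 < x) → F x = 0) :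
    ∫ x in Ioi (0 : ℝ), F x = ∫ u in (1 / 2 : ℝ)..3, 2 * (u : ℂ) * F (u ^ 2) := by
  have h := integral_comp_rpow_Ioi_of_pos (g := F) (p := 2) (by norm_num)
  rw [← h, intervalIntegral.integral_of_le (by norm_num),
    ← setIntegral_eq_of_subset_of_forall_sdiff_eq_zero (s := Ioc (1 / 2 : ℝ) 3) (t := Ioi 0)
      (f := fun u : ℝ => 2 * (u : ℂ) * F (u ^ 2)) measurableSet_Ioi]
  · apply setIntegral_congr_fun measurableSet_Ioi
    intro u hu
    simp only
    rw [Complex.real_smul, show (2 : ℝ) - 1 = 1 by norm_num, Real.rpow_one]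
    norm_num
  · intro u hu; exact lt_trans (by norm_num) hu.1
  · intro u hu
    have h0 : 0 < u := hu.1
    have : F (u ^ 2) = 0 := by
      apply hF
      have h2 := hu.2
      simp only [mem_Ioc, not_and_or, not_lt, not_le] at h2
      rcases h2 with h2 | h2
      · left; nlinarith
      · right; nlinarith
    simp only [this, mul_zero]

noncomputable def VU (U : ℝ → ℝ) : ℝ → ℂ := fun u => ((2 * u * U (u ^ 2) : ℝ) : ℂ)

lemma U_zero {U : ℝ → ℝ} (hsupp : Function.support U ⊆ Set.Icc 1 2) {x : ℝ} (hx : x < 1 ∨ 4 < x) :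
    U x = 0 := by
  by_contra h
  have := hsupp h
  rcases hx with h | h
  · linarith [this.1]
  · linarith [this.2]

lemma VU_SC {U : ℝ → ℝ} (hU : ContDiff ℝ (⊤ : ℕ∞) U)
    (hsupp : Function.support U ⊆ Set.Icc 1 2) : SC (VU U) := by
  refine ⟨?_, fun u hu => ?_⟩
  · apply Complex.ofRealCLM.contDiff.comp
    exact (contDiff_const.mul contDiff_id).mul (hU.comp (contDiff_id.pow 2))
  · simp [VU, U_zero hsupp hu]

lemma mellin_eq {U : ℝ → ℝ} (hsupp : Function.support U ⊆ Set.Icc 1 2) :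
    (mellinU U (3 / 4) : ℂ) = ∫ u in (1 / 2 : ℝ)..3, VU U u / (√u : ℂ) := by
  rw [mellinU, ← integral_complex_ofReal]
  rw [subst_sq _ (fun x hx => by simp [U_zero hsupp hx])]
  apply intervalIntegral.integral_congr
  intro u hu
  rw [uIcc_of_le (by norm_num)] at hu
  have hu0 : 0 < u := by linarith [hu.1]
  have : (u ^ 2) ^ ((3 : ℝ) / 4 - 1) = (√u)⁻¹ := by
    rw [← Real.rpow_natCast, ← Real.rpow_mul hu0.le, Real.sqrt_eq_rpow, ← Real.rpow_neg hu0.le]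
    norm_num
  simp only [VU, this]
  push_cast; ring

lemma mellin_pos {U : ℝ → ℝ} (hU : ContDiff ℝ (⊤ : ℕ∞) U)
    (hsupp : Function.support U ⊆ Set.Icc 1 2) (hU0 : ∀ x, 0 ≤ U x) (hUne : U ≠ 0) :
    0 < mellinU U (3 / 4) := by
  have hc : ContinuousOn (fun x : ℝ => U x * x ^ ((3 : ℝ) / 4 - 1)) (Icc 1 2) := by
    apply hU.continuous.continuousOn.mul
    intro x hx
    exact (Real.continuousAt_rpow_const _ _ (Or.inl (by linarith [hx.1]))).continuousWithinAt
  have hi : IntegrableOn (fun x : ℝ => U x * x ^ ((3 : ℝ) / 4 - 1)) (Ioi 0) := by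
    have h1 := hc.integrableOn_compact (μ := volume) isCompact_Icc
    refine (integrableOn_iff_integrable_of_support_subset ?_).1 h1 |>.integrableOn
    intro x hx
    apply hsupp
    intro h
    apply hx
    simp [h]
  rw [mellinU, setIntegral_pos_iff_support_of_nonneg_ae _ hi]
  · obtain ⟨x, hx⟩ := Function.ne_iff.1 hUne
    have ho : IsOpen {x | U x ≠ 0} := isOpen_ne_fun hU.continuous continuous_const
    refine lt_of_lt_of_le (ho.measure_pos volume ⟨x, hx⟩) (measure_mono ?_)
    intro y hy
    have hy1 := (hsupp hy).1
    have hy0 : 0 < y := by linarith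
    exact ⟨mul_ne_zero hy (Real.rpow_pos_of_pos hy0 _).ne', hy0⟩
  · refine (ae_restrict_iff' measurableSet_Ioi).2 (Eventually.of_forall fun y hy => ?_)
    exact mul_nonneg (hU0 y) (Real.rpow_nonneg (le_of_lt hy) _)

lemma Ik_eq {U : ℝ → ℝ} (hsupp : Function.support U ⊆ Set.Icc 1 2) (k : ℕ) (a b : ℝ) {X : ℝ} (hX : 0 < X) :
    Ik U k a b X = X * (I ^ (k - 1) / (2 * π)) *
      Osc ((k - 1 : ℕ) : ℤ) (VU U) (4 * π * a * √X) (4 * π * b * √X) := by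
  have h1 := integral_comp_mul_left_Ioi (fun x : ℝ => (U (x / X) : ℂ) * e (2 * a * Real.sqrt x) *
      (besselJ (k - 1) (4 * Real.pi * b * Real.sqrt x) : ℂ)) 0 hX
  rw [mul_zero, Complex.real_smul] at h1
  have hX' : (X : ℂ) ≠ 0 := by exact_mod_cast hX.ne'
  have h2 : Ik U k a b X = X * ∫ x in Ioi (0 : ℝ), (U (X * x / X) : ℂ) * e (2 * a * Real.sqrt (X * x)) *
      (besselJ (k - 1) (4 * Real.pi * b * Real.sqrt (X * x)) : ℂ) := by
    rw [h1, Ik, Complex.ofReal_inv, mul_inv_cancel_left₀ hX']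
  rw [h2, subst_sq _ (fun x hx => by
    rw [mul_div_cancel_left₀ _ hX.ne', U_zero hsupp hx]; simp), mul_assoc (X : ℂ) _ (Osc _ _ _ _)]
  congr 1
  rw [Osc, ← intervalIntegral.integral_const_mul]
  apply intervalIntegral.integral_congr
  intro u hu
  rw [uIcc_of_le (by norm_num)] at hu
  have hu0 : 0 < u := by linarith [hu.1]
  simp only
  rw [mul_div_cancel_left₀ _ hX.ne', Real.sqrt_mul hX.le, Real.sqrt_sq hu0.le, besselJ_eq, VU, e]
  have e1 : Complex.exp (2 * (π : ℂ) * I * ((2 * a * (√X * u) : ℝ) : ℂ))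
      = Complex.exp (((4 * π * a * √X * u : ℝ) : ℂ) * I) := by
    congr 1; push_cast; ring
  rw [e1, show 4 * π * b * (√X * u) = 4 * π * b * √X * u by ring]
  push_cast; ring

lemma sqrt_alpha {r p X : ℝ} (hr : 0 < r) (hp : 0 < p) (hX : 0 < X) :
    r ^ ((1 : ℝ) / 4) / (p ^ ((1 : ℝ) / 2) * X ^ ((3 : ℝ) / 4)) * X
      = √(4 * π * (√r / p) * √X) / √(4 * π) := by
  have h4 : 0 < √(4 * π) := Real.sqrt_pos.2 (by positivity)
  have a1 : √(√r) = r ^ ((1 : ℝ) / 4) := by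
    rw [Real.sqrt_eq_rpow, Real.sqrt_eq_rpow, ← Real.rpow_mul hr.le]; norm_num
  have a2 : √(√X) = X ^ ((1 : ℝ) / 4) := by
    rw [Real.sqrt_eq_rpow, Real.sqrt_eq_rpow, ← Real.rpow_mul hX.le]; norm_num
  have a3 : X ^ ((1 : ℝ) / 4) * X ^ ((3 : ℝ) / 4) = X := by
    rw [← Real.rpow_add hX]; norm_num
  rw [Real.sqrt_mul (by positivity), Real.sqrt_mul (by positivity), Real.sqrt_div (by positivity),
    a1, a2, ← Real.sqrt_eq_rpow p]
  have h5 : 0 < √p := Real.sqrt_pos.2 hp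
  have h6 : 0 < X ^ ((3 : ℝ) / 4) := Real.rpow_pos_of_pos hX _
  field_simp
  linear_combination (-1 : ℝ) * a3

lemma pre_eq {U : ℝ → ℝ} (hsupp : Function.support U ⊆ Set.Icc 1 2) (k : ℕ) (hk : 1 ≤ k) (M : ℝ)
    {r p X b : ℝ} (hr : 0 < r) (hp : 0 < p) (hX : 0 < X) :
    (2 * (Real.pi : ℂ) * ((1 + Complex.I) / (M : ℂ)) *
                      (((r : ℝ) ^ ((1 : ℝ) / 4) : ℝ) : ℂ)) /
                    (Complex.I ^ k * (((p : ℝ) ^ ((1 : ℝ) / 2) : ℝ) : ℂ) *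
                      ((X ^ ((3 : ℝ) / 4) : ℝ) : ℂ)) * Ik U k (√r / p) b X
     = (1 + I) / (M * I) * ((√(4 * π * (√r / p) * √X) / √(4 * π) : ℝ) : ℂ) *
      Osc ((k - 1 : ℕ) : ℤ) (VU U) (4 * π * (√r / p) * √X) (4 * π * b * √X) := by
  rw [Ik_eq hsupp k _ _ hX, ← sqrt_alpha hr hp hX]
  obtain ⟨j, rfl⟩ : ∃ j, k = j + 1 := ⟨k - 1, by omega⟩
  rw [Nat.add_sub_cancel]
  have hpi : (π : ℂ) ≠ 0 := by exact_mod_cast Real.pi_ne_zero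
  have hI : I ^ j ≠ 0 := pow_ne_zero _ I_ne_zero
  push_cast
  generalize Osc (j : ℤ) (VU U) _ _ = O
  generalize ((r ^ ((1 : ℝ) / 4) : ℝ) : ℂ) = R
  generalize ((p ^ ((1 : ℝ) / 2) : ℝ) : ℂ) = P
  generalize ((X ^ ((3 : ℝ) / 4) : ℝ) : ℂ) = Y
  rw [pow_succ]
  simp only [div_eq_mul_inv, mul_inv]
  have i1 : I ^ j * (I ^ j)⁻¹ = 1 := mul_inv_cancel₀ hI
  have i2 : (π : ℂ) * (π : ℂ)⁻¹ = 1 := mul_inv_cancel₀ hpi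
  linear_combination ((1 + I) * (M : ℂ)⁻¹ * R * I⁻¹ * P⁻¹ * Y⁻¹ * X * O) * (π * (π : ℂ)⁻¹) * i1 +
    ((1 + I) * (M : ℂ)⁻¹ * R * I⁻¹ * P⁻¹ * Y⁻¹ * X * O) * i2

lemma char_sum_zero {p : ℕ} (hp : p.Prime) {r n : ℕ} (h : ¬ (p : ℤ) ∣ (n : ℤ) - r) :
    ∑ a ∈ Finset.range p, e ((a : ℝ) * ((n : ℝ) - (r : ℝ)) / p) = 0 := by
  have hp0 : (p : ℂ) ≠ 0 := by exact_mod_cast hp.ne_zero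
  set ζ := Complex.exp (2 * π * I * (((n : ℂ) - r) / p)) with hζ
  have h1 : ∀ a : ℕ, e ((a : ℝ) * ((n : ℝ) - (r : ℝ)) / p) = ζ ^ a := by
    intro a
    rw [e, hζ, ← Complex.exp_nat_mul]; congr 1; push_cast; ring
  have hpow : ζ ^ p = 1 := by
    rw [hζ, ← Complex.exp_nat_mul, Complex.exp_eq_one_iff]
    exact ⟨(n : ℤ) - r, by push_cast; field_simp⟩
  have hne : ζ ≠ 1 := by
    intro h1
    rw [hζ, Complex.exp_eq_one_iff] at h1
    obtain ⟨q, hq⟩ := h1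
    apply h
    refine ⟨q, ?_⟩
    have h2 : (2 * π * I : ℂ) ≠ 0 := Complex.two_pi_I_ne_zero
    have h3 : ((n : ℂ) - r) / p = q := by
      apply mul_left_cancel₀ h2; rw [hq]; ring
    rw [div_eq_iff hp0] at h3
    have : ((n : ℂ) - r) = p * q := by rw [h3]; ring
    exact_mod_cast this
  rw [Finset.sum_congr rfl (fun a _ => h1 a), geom_sum_eq hne, hpow]; simp

lemma char_sum_le (p : ℕ) (hp : p.Prime) (t : ℝ) :
    ‖(1 / (p : ℂ)) * ∑ a ∈ Finset.range p, e ((a : ℝ) * t / p)‖ ≤ 1 := by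
  have hp0 : (0 : ℝ) < p := by exact_mod_cast hp.pos
  have h1 : ‖∑ a ∈ Finset.range p, e ((a : ℝ) * t / p)‖ ≤ p := by
    refine (norm_sum_le_of_le (f := fun a : ℕ => e ((a : ℝ) * t / p)) (n := fun _ => 1) _ (fun a _ => ?_)).trans (by simp)
    rw [e, show 2 * (π : ℂ) * I * (((a : ℝ) * t / p : ℝ) : ℂ) = ((2 * π * ((a : ℝ) * t / p) : ℝ) : ℂ) * I by
      push_cast; ring, Complex.norm_exp_ofReal_mul_I]
  rw [norm_mul, norm_div, norm_one, Complex.norm_natCast]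
  calc _ ≤ 1 / (p : ℝ) * p := by gcongr
    _ = 1 := by field_simp

lemma coef_norm {M : ℝ} (hM : 0 < M) (s : ℝ) (hs : 0 ≤ s) :
    ‖(1 + I) / (M * I) * ((√s / √(4 * π) : ℝ) : ℂ)‖ ≤ 2 / M * √s := by
  have h1 : ‖(1 + I : ℂ)‖ ≤ 2 := by
    refine (norm_add_le _ _).trans ?_
    rw [Complex.norm_I, norm_one]; norm_num
  have h4 : 1 ≤ √(4 * π) := by
    rw [Real.one_le_sqrt]; linarith [Real.pi_gt_three]
  rw [norm_mul, norm_div, norm_mul, Complex.norm_I, mul_one, Complex.norm_real, Complex.norm_real,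
    Real.norm_of_nonneg hM.le, Real.norm_of_nonneg (by positivity)]
  have h5 : √s / √(4 * π) ≤ √s := div_le_self (Real.sqrt_nonneg _) h4
  gcongr

lemma off_bound {p : ℕ} (hp : p.Prime) {N X ε : ℝ} {r n : ℕ} (hε : 0 < ε)
    (hN : 1 < N) (hX : 1 < X) (hpN : (p : ℝ) ^ 2 / N < X) (hNX : N < X ^ (1 - ε))
    (hr1 : N ≤ (r : ℝ)) (hr2 : (r : ℝ) ≤ 2 * N) (hn1 : N ≤ (n : ℝ)) (hn2 : (n : ℝ) ≤ 2 * N)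
    (hrn : r ≠ n) (hdvd : (p : ℤ) ∣ (n : ℤ) - r) {α β : ℝ}
    (hα : α = 4 * π * (√r / p) * √X) (hβ : β = 4 * π * (√n / p) * √X) :
    1 ≤ α ∧ α ≤ 32 * X ∧ α ^ 2 ≠ β ^ 2 ∧ α / |α ^ 2 - β ^ 2| ≤ X ^ (-(ε / 2)) := by
  have hp0 : (0 : ℝ) < p := by exact_mod_cast hp.pos
  have hp1 : (1 : ℝ) ≤ p := by exact_mod_cast hp.one_le
  have hX0 : 0 < X := by linarith
  have hN0 : 0 < N := by linarith
  have hsr : 0 < √(r : ℝ) := Real.sqrt_pos.2 (by linarith)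
  have hsn : 0 < √(n : ℝ) := Real.sqrt_pos.2 (by linarith)
  have hsX : 0 < √X := Real.sqrt_pos.2 hX0
  have hsN : 0 < √N := Real.sqrt_pos.2 hN0
  have hπ := Real.pi_gt_three
  have hπ4 := Real.pi_le_four
  have hNltX : N ≤ X := by
    refine hNX.le.trans ?_
    calc X ^ (1 - ε) ≤ X ^ (1 : ℝ) := Real.rpow_le_rpow_of_exponent_le hX.le (by linarith)
      _ = X := Real.rpow_one X
  have hp2 : (p : ℝ) ≤ √N * √X := by
    rw [← Real.sqrt_mul hN0.le]
    apply Real.le_sqrt_of_sq_le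
    rw [div_lt_iff₀ hN0] at hpN; linarith
  have hsrN : √N ≤ √(r : ℝ) := Real.sqrt_le_sqrt hr1
  have hαp : 0 < α := by rw [hα]; positivity
  have hβp : 0 < β := by rw [hβ]; positivity
  have hα' : α = 4 * π * (√r * √X) / p := by rw [hα]; ring
  have h1 : 1 ≤ α := by
    rw [hα', le_div_iff₀ hp0, one_mul]
    have : √N * √X ≤ √r * √X := by gcongr
    nlinarith [mul_pos hsr hsX]
  have hr3 : ∀ q : ℕ, (q : ℝ) ≤ 2 * N → √(q : ℝ) ≤ 3 / 2 * √N := by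
    intro q hq
    apply Real.sqrt_le_iff.2
    refine ⟨by positivity, ?_⟩
    rw [mul_pow, Real.sq_sqrt hN0.le]; linarith
  have h2 : α ≤ 32 * X := by
    rw [hα', div_le_iff₀ hp0]
    have a1 := hr3 r hr2
    have a2 : √N ≤ √X := Real.sqrt_le_sqrt hNltX
    have a3 : √r * √X ≤ 3 / 2 * √X * √X := by gcongr; linarith
    rw [mul_assoc, Real.mul_self_sqrt hX0.le] at a3
    have a4 : 4 * π * (√r * √X) ≤ 4 * 4 * (3 / 2 * X) := by gcongr
    nlinarith
  have hdiff : (p : ℝ) ≤ |(n : ℝ) - r| := by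
    have hz : (n : ℤ) - r ≠ 0 := by
      intro h; apply hrn; omega
    have := Int.le_of_dvd (abs_pos.2 hz) ((dvd_abs _ _).2 hdvd)
    exact_mod_cast this
  have hfac : α ^ 2 - β ^ 2 = (4 * π / p) ^ 2 * X * ((r : ℝ) - n) := by
    rw [hα, hβ]
    have e1 := Real.sq_sqrt hX0.le
    have e2 := Real.sq_sqrt (Nat.cast_nonneg (α := ℝ) r)
    have e3 := Real.sq_sqrt (Nat.cast_nonneg (α := ℝ) n)
    have : (4 * π * (√r / p) * √X) ^ 2 - (4 * π * (√n / p) * √X) ^ 2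
      = (4 * π / p) ^ 2 * (√X ^ 2) * (√(r : ℝ) ^ 2 - √(n : ℝ) ^ 2) := by ring
    rw [this, e1, e2, e3]
  have hD : |α ^ 2 - β ^ 2| = (4 * π / p) ^ 2 * X * |(n : ℝ) - r| := by
    rw [hfac, abs_mul, abs_of_pos (by positivity), abs_sub_comm]
  have hDlow : (4 * π) ^ 2 / p * X ≤ |α ^ 2 - β ^ 2| := by
    rw [hD]
    calc (4 * π) ^ 2 / p * X = (4 * π / p) ^ 2 * X * p := by field_simp
      _ ≤ _ := by gcongr
  have hDpos : 0 < |α ^ 2 - β ^ 2| := lt_of_lt_of_le (by positivity) hDlow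
  refine ⟨h1, h2, ?_, ?_⟩
  · intro h
    rw [h, sub_self, abs_zero] at hDpos
    exact lt_irrefl _ hDpos
  · have b1 : α / |α ^ 2 - β ^ 2| ≤ √N / √X := by
      have a1 := hr3 r hr2
      have : α * √X = 4 * π / p * √r * X := by
        have e0 := Real.mul_self_sqrt hX0.le
        calc α * √X = 4 * π / p * √r * (√X * √X) := by rw [hα']; ring
          _ = _ := by rw [e0]
      rw [div_le_div_iff₀ hDpos hsX, this]
      refine le_trans ?_ (mul_le_mul_of_nonneg_left hDlow hsN.le)
      have e2 : √N * ((4 * π) ^ 2 / p * X) = 4 * π / p * (4 * π * √N) * X := by ring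
      rw [e2]
      gcongr
      nlinarith
    refine b1.trans ?_
    rw [← Real.sqrt_div hN0.le, Real.sqrt_le_iff]
    refine ⟨(Real.rpow_pos_of_pos hX0 _).le, ?_⟩
    rw [← Real.rpow_natCast, ← Real.rpow_mul hX0.le, div_le_iff₀ hX0]
    have : X ^ (-(ε / 2) * (2 : ℕ)) * X = X ^ (1 - ε) := by
      nth_rewrite 2 [← Real.rpow_one X]
      rw [← Real.rpow_add hX0]; congr 1; push_cast; ring
    rw [this]; exact hNX.le

end helpers

/-- The Bessel δ-method: with `C_U = (1+i)/Ũ(3/4)`, for a prime `p` and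
`N, X > 1` with `X > p²/N` and `X^{1−ε} > N`, and integers `r, n ∈ [N, 2N]`,
`(2π C_U r^{1/4} / (i^k p^{1/2} X^{3/4})) (1/p) Σ_{a mod p} e(a(n−r)/p) I_k(√r/p, √n/p; X)
  = δ(r=n)(1 + E₁) + E₂`,
with `|E₁| ≤ C₁ p/√(NX)` (`C₁` depending only on `k, U`) and `|E₂| ≤ C₂ X^{−A}`
(`C₂` depending only on `k, U, A, ε`). -/
theorem stmt7 (k : ℕ) (hk : 1 ≤ k) (U : ℝ → ℝ) (hU : ContDiff ℝ (⊤ : ℕ∞) U)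
    (hsupp : Function.support U ⊆ Set.Icc 1 2) (hU0 : ∀ x, 0 ≤ U x) (hUne : U ≠ 0) :
    ∃ C₁ : ℝ, 0 < C₁ ∧
      ∀ ε A : ℝ, 0 < ε → 0 ≤ A →
        ∃ C₂ : ℝ, 0 < C₂ ∧
          ∀ (p : ℕ), Nat.Prime p →
            ∀ (N X : ℝ) (r n : ℕ),
              1 < N → 1 < X → (p : ℝ) ^ 2 / N < X → N < X ^ (1 - ε) →
              N ≤ (r : ℝ) → (r : ℝ) ≤ 2 * N → N ≤ (n : ℝ) → (n : ℝ) ≤ 2 * N →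
              ∃ E₁ E₂ : ℂ,
                (2 * (Real.pi : ℂ) * ((1 + Complex.I) / (mellinU U (3 / 4) : ℂ)) *
                      (((r : ℝ) ^ ((1 : ℝ) / 4) : ℝ) : ℂ)) /
                    (Complex.I ^ k * (((p : ℝ) ^ ((1 : ℝ) / 2) : ℝ) : ℂ) *
                      ((X ^ ((3 : ℝ) / 4) : ℝ) : ℂ)) *
                    ((1 / (p : ℂ)) *
                      ∑ a ∈ Finset.range p, e ((a : ℝ) * ((n : ℝ) - (r : ℝ)) / p)) *
                    Ik U k (Real.sqrt r / p) (Real.sqrt n / p) X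
                  = (if r = n then 1 else 0) * (1 + E₁) + E₂ ∧
                ‖E₁‖ ≤ C₁ * p / Real.sqrt (N * X) ∧ ‖E₂‖ ≤ C₂ * X ^ (-A) := by
  have hM := mellin_pos hU hsupp hU0 hUne
  have hV := VU_SC hU hsupp
  obtain ⟨C, hC0, hC⟩ := diag_asymp ((k - 1 : ℕ) : ℤ) hV
  set M := mellinU U (3 / 4) with hMdef
  refine ⟨2 / M * C + 1, by positivity, fun ε A hε hA => ?_⟩
  obtain ⟨K, hK⟩ := exists_nat_ge (2 * (A + 1) / ε)
  obtain ⟨D, hD0, hD⟩ := Osc_decay ((k - 1 : ℕ) : ℤ) K _ hV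
  refine ⟨2 / M * 32 * D + 1, by positivity, ?_⟩
  intro p hp N X r n hN hX hpN hNX hr1 hr2 hn1 hn2
  have hp0 : (0 : ℝ) < p := by exact_mod_cast hp.pos
  have hX0 : 0 < X := by linarith
  have hr0 : (0 : ℝ) < r := by linarith
  have hπ := Real.pi_gt_three
  have hNX0 : 0 < N * X := by positivity
  rw [mul_right_comm, pre_eq hsupp k hk M hr0 hp0 hX0]
  set α := 4 * Real.pi * (Real.sqrt r / p) * Real.sqrt X with hα
  have hα0 : 0 < α := by
    have := Real.sqrt_pos.2 hX0
    have := Real.sqrt_pos.2 hr0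
    positivity
  by_cases hrn : r = n
  · subst hrn
    have hS : (1 / (p : ℂ)) * ∑ a ∈ Finset.range p, e ((a : ℝ) * ((r : ℝ) - (r : ℝ)) / p) = 1 := by
      have : (p : ℂ) ≠ 0 := by exact_mod_cast hp.ne_zero
      simp [e, this]
    rw [hS, mul_one]
    have hc := hC α hα0
    rw [fresnel hV, ← mellin_eq hsupp, ← hMdef] at hc
    set O := Osc ((k - 1 : ℕ) : ℤ) (VU U) α α
    set c := (1 + Complex.I) / (M * Complex.I) * ((Real.sqrt α / Real.sqrt (4 * Real.pi) : ℝ) : ℂ) with hcdef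
    set L := (((Real.sqrt α)⁻¹ : ℝ) : ℂ) * ((Real.sqrt Real.pi : ℂ) * (1 + Complex.I) * (M : ℂ)) with hL
    have hcL : c * L = 1 := by
      have s1 : ((Real.sqrt α : ℝ) : ℂ) ≠ 0 := by exact_mod_cast (Real.sqrt_pos.2 hα0).ne'
      have s2 : ((Real.sqrt Real.pi : ℝ) : ℂ) ≠ 0 := by exact_mod_cast (Real.sqrt_pos.2 Real.pi_pos).ne'
      have s3 : (M : ℂ) ≠ 0 := by exact_mod_cast hM.ne'
      have s4 : Real.sqrt (4 * Real.pi) = 2 * Real.sqrt Real.pi := by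
        rw [Real.sqrt_mul (by norm_num), show (4 : ℝ) = 2 ^ 2 by norm_num, Real.sqrt_sq (by norm_num)]
      have s5 := Complex.I_ne_zero
      rw [hcdef, hL, s4]
      push_cast
      field_simp
      linear_combination Complex.I_sq
    refine ⟨c * (O - L), 0, ?_, ?_, ?_⟩
    · rw [if_pos rfl]
      linear_combination hcL
    · rw [norm_mul]
      have h1 := mul_le_mul (coef_norm hM α hα0.le) hc (norm_nonneg _) (by positivity)
      refine h1.trans ?_
      have s1 := Real.sqrt_pos.2 hα0
      have e1 : 2 / M * Real.sqrt α * (C * (α⁻¹ * (Real.sqrt α)⁻¹)) = 2 / M * C * α⁻¹ := by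
        field_simp
      rw [e1, mul_div_assoc]
      have h2 : α⁻¹ ≤ p / Real.sqrt (N * X) := by
        rw [inv_le_comm₀ hα0 (by positivity), inv_div, hα, Real.sqrt_mul (by linarith)]
        have h3 : Real.sqrt N ≤ Real.sqrt r := Real.sqrt_le_sqrt hr1
        have h4 : 4 * Real.pi * (Real.sqrt r / p) * Real.sqrt X = 4 * Real.pi * (Real.sqrt r * Real.sqrt X / p) := by ring
        rw [h4]
        have h5 : Real.sqrt N * Real.sqrt X / p ≤ Real.sqrt r * Real.sqrt X / p := by gcongr
        have h6 : 0 ≤ Real.sqrt r * Real.sqrt X / p := by positivity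
        nlinarith
      have h3 : 0 ≤ p / Real.sqrt (N * X) := by positivity
      have h4 : 0 ≤ 2 / M * C := by positivity
      nlinarith [mul_le_mul_of_nonneg_left h2 h4]
    · rw [norm_zero]; positivity
  · refine ⟨0, _, by rw [if_neg hrn, zero_mul, zero_add], by rw [norm_zero]; positivity, ?_⟩
    by_cases hdvd : (p : ℤ) ∣ (n : ℤ) - r
    · obtain ⟨a1, a2, a3, a4⟩ := off_bound hp hε hN hX hpN hNX hr1 hr2 hn1 hn2 hrn hdvd hα rfl
      rw [norm_mul]
      refine (mul_le_of_le_one_right (norm_nonneg _) (char_sum_le p hp _)).trans ?_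
      rw [norm_mul]
      have h1 := mul_le_mul (coef_norm hM α hα0.le) (hD α _ a1 a3) (norm_nonneg _) (by positivity)
      refine h1.trans ?_
      have b1 : Real.sqrt α ≤ 32 * X := by
        refine le_trans ?_ a2
        rw [Real.sqrt_le_iff]
        exact ⟨hα0.le, by nlinarith⟩
      have b2 : (α / |α ^ 2 - (4 * Real.pi * (Real.sqrt n / p) * Real.sqrt X) ^ 2|) ^ K ≤ X ^ (-(A + 1)) := by
        refine (pow_le_pow_left₀ (by positivity) a4 K).trans ?_
        rw [← Real.rpow_natCast, ← Real.rpow_mul hX0.le]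
        apply Real.rpow_le_rpow_of_exponent_le hX.le
        rw [div_le_iff₀ hε] at hK
        nlinarith
      have b3 : X * X ^ (-(A + 1)) = X ^ (-A) := by
        nth_rewrite 1 [← Real.rpow_one X]
        rw [← Real.rpow_add hX0]; congr 1; ring
      have b4 : 0 ≤ X ^ (-A) := (Real.rpow_pos_of_pos hX0 _).le
      calc _ ≤ 2 / M * (32 * X) * (D * X ^ (-(A + 1))) := by gcongr
        _ = 2 / M * 32 * D * (X * X ^ (-(A + 1))) := by ring
        _ = 2 / M * 32 * D * X ^ (-A) := by rw [b3]
        _ ≤ _ := by nlinarith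
    · rw [char_sum_zero hp hdvd, mul_zero, mul_zero, norm_zero]
      have b4 : 0 ≤ X ^ (-A) := (Real.rpow_pos_of_pos hX0 _).le
      positivity
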